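/- In a cone with joins, the cancellation property holds in the form: a + v ≤ b + v implies a + εv ≤ b + εv, where εv := inf{λ·v : λ > 0}. -/

import Mathlib

open scoped NNReal

/-- The part at infinity of an element of a cone: `ε v = inf {λ•v : λ > 0}`. -/
noncomputable def epsPart {J : Type*} [CompleteLattice J] [AddCommMonoid J] [Module ℝ≥0 J]
    (v : J) : J :=
  sInf {w | ∃ l : ℝ≥0, 0 < l ∧ w = l • v}

/-!
Adding the inequality `a + v ≤ b + v` to itself, and reusing `v` as a catalyst at each step, gives
`n • a + v ≤ n • b + v` for every natural number `n`. Given `l > 0`, take `n` with `n * l ≥ 1`, add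
`(n * l - 1) • v` to both sides and divide by `n`: thus `a + l • v ≤ b + l • v` for every `l > 0`,
however small. Since infima commute with addition, taking infima over `l` gives the claim.
-/

theorem posSMulMono_of_le_iff_exists_add {𝕜 J : Type*} [Zero 𝕜] [Preorder 𝕜] [Preorder J]
    [AddZeroClass J] [DistribSMul 𝕜 J] (hle : ∀ x y : J, x ≤ y ↔ ∃ z, x + z = y) :
    PosSMulMono 𝕜 J where
  smul_le_smul_of_nonneg_left c _ x y hxy := by
    obtain ⟨z, rfl⟩ := (hle x y).1 hxy
    exact (hle _ _).2 ⟨c • z, (smul_add c x z).symm⟩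

theorem addLeftMono_of_sInf_image_add {J : Type*} [CompleteLattice J] [Add J]
    (hinf : ∀ (v : J) (A : Set J), sInf ((fun a => v + a) '' A) = v + sInf A) :
    AddLeftMono J where
  elim v x y hxy :=
    calc v + x = v + sInf {x, y} := by rw [sInf_pair, inf_eq_left.2 hxy]
      _ = sInf ((fun a => v + a) '' {x, y}) := (hinf v _).symm
      _ ≤ v + y := sInf_le ⟨y, by simp, rfl⟩

section Cancellation

variable {J : Type*} [AddCommMonoid J] [Preorder J] [AddLeftMono J] {a b v : J}

theorem nsmul_add_le_nsmul_add_of_add_le_add (h : a + v ≤ b + v) (n : ℕ) :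
    n • a + v ≤ n • b + v := by
  induction n with
  | zero => simp
  | succ n ih =>
    calc (n + 1) • a + v = a + (n • a + v) := by rw [succ_nsmul', add_assoc]
      _ ≤ a + (n • b + v) := by gcongr
      _ = n • b + (a + v) := add_left_comm _ _ _
      _ ≤ n • b + (b + v) := by gcongr
      _ = (n + 1) • b + v := by rw [succ_nsmul, add_assoc]

theorem add_smul_le_add_smul_of_add_le_add {𝕜 : Type*} [Semiring 𝕜] [LinearOrder 𝕜]
    [IsStrictOrderedRing 𝕜] [ExistsAddOfLE 𝕜] [Archimedean 𝕜] [Module 𝕜 J] [PosSMulReflectLE 𝕜 J]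
    (h : a + v ≤ b + v) {l : 𝕜} (hl : 0 < l) : a + l • v ≤ b + l • v := by
  obtain ⟨n, hn⟩ : ∃ n : ℕ, 1 ≤ n * l := by simpa only [nsmul_eq_mul] using Archimedean.arch 1 hl
  have n_pos : (0 : 𝕜) < n := pos_of_mul_pos_left (one_pos.trans_le hn) hl.le
  obtain ⟨d, hd⟩ := exists_add_of_le hn
  have smul_add_smul (x : J) : (n : 𝕜) • (x + l • v) = n • x + v + d • v := by
    rw [smul_add, smul_smul, hd, add_smul, one_smul, Nat.cast_smul_eq_nsmul, add_assoc]
  refine le_of_smul_le_smul_left ?_ n_pos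
  calc (n : 𝕜) • (a + l • v) = n • a + v + d • v := smul_add_smul a
    _ ≤ n • b + v + d • v := by grw [nsmul_add_le_nsmul_add_of_add_le_add h n]
    _ = (n : 𝕜) • (b + l • v) := (smul_add_smul b).symm

end Cancellation

theorem stmt7_general {J : Type*} [CompleteLattice J] [AddCommMonoid J] [Module ℝ≥0 J]
    [PosSMulMono ℝ≥0 J]
    (hinf : ∀ (v : J) (A : Set J), sInf ((fun a => v + a) '' A) = v + sInf A)
    (a b v : J) (h : a + v ≤ b + v) :
    a + epsPart v ≤ b + epsPart v := by
  have : AddLeftMono J := addLeftMono_of_sInf_image_add hinf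
  rw [epsPart, ← hinf, ← hinf]
  refine le_sInf ?_
  rintro _ ⟨_, ⟨l, hl, rfl⟩, rfl⟩
  calc sInf ((fun x => a + x) '' {w | ∃ l : ℝ≥0, 0 < l ∧ w = l • v})
      ≤ a + l • v := sInf_le ⟨l • v, ⟨l, hl, rfl⟩, rfl⟩
    _ ≤ b + l • v := add_smul_le_add_smul_of_add_le_add h hl

/-- Cancellation property (second version) in a cone with joins:
`a + v ≤ b + v` implies `a + εv ≤ b + εv`. -/
theorem stmt7 {J : Type*} [CompleteLattice J] [AddCommMonoid J] [Module ℝ≥0 J]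
    (hle : ∀ x y : J, x ≤ y ↔ ∃ z, x + z = y)
    (hscale : ∀ v : J, IsLUB {w | ∃ η : ℝ≥0, η < 1 ∧ w = η • v} v)
    (hinf : ∀ (v : J) (A : Set J), sInf ((fun a => v + a) '' A) = v + sInf A)
    (a b v : J) (h : a + v ≤ b + v) :
    a + epsPart v ≤ b + epsPart v := by
  have : PosSMulMono ℝ≥0 J := posSMulMono_of_le_iff_exists_add hle
  exact stmt7_general hinf a b v h
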